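/- Let X₀ be a shift space and φ₀ : Σ → ℝ continuous, and suppose P_top(X₀, φ₀|_{X₀}) > b, where b = sup{∫φ₀ dμ : μ ∈ M_{X₀}} (equivalently, every equilibrium state of φ₀|_{X₀} has positive entropy). Let ε > 0 satisfy P_top(X₀,φ₀|_{X₀}) − b > 5ε. Then for every n ∈ ℕ there exists a shift space Z_n ⊆ Σ with L(Z_n, n) = L(X₀, n) and P_top(Z_n, φ₀|_{Z_n}) < P_top(X₀, φ₀|_{X₀}) − ε. In particular, the generalized pressure function (X, φ) ↦ P_top(X, φ|_X) is not continuous at (X₀, φ₀) with respect to the metric d(X,Y) = 2^{−min{n : L(X,n) ≠ L(Y,n)}} on shift spaces and the supremum norm on C(Σ,ℝ). -/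

import Mathlib

open Filter MeasureTheory Topology
open scoped BigOperators ENNReal

noncomputable section

namespace PaperStmt

/-- The full two-sided shift: bi-infinite sequences over the alphabet `Fin d`. -/
abbrev FullShift (d : ℕ) := ℤ → Fin d

/-- The (left) shift map `f(x)_k = x_{k+1}`. -/
def shift (d : ℕ) : FullShift d → FullShift d := fun x k => x (k + 1)

/-- A (two-sided) shift space: a nonempty closed shift-invariant subset. -/
def IsShiftSpace {d : ℕ} (X : Set (FullShift d)) : Prop :=
  X.Nonempty ∧ IsClosed X ∧ shift d '' X = X

/-- The cylinder at position `0` determined by a word `w` of length `n`. -/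
def cyl {d n : ℕ} (w : Fin n → Fin d) : Set (FullShift d) :=
  {x | ∀ i : Fin n, x ((i : ℕ) : ℤ) = w i}

/-- The language of `X` in length `n`: words of length `n` occurring in elements of `X`
(at position `0`; for shift-invariant `X` this is occurrence anywhere). -/
def langSet {d : ℕ} (X : Set (FullShift d)) (n : ℕ) : Set (Fin n → Fin d) :=
  {w | (X ∩ cyl w).Nonempty}

/-- Birkhoff sum `S_n φ`. -/
def birkhoff {d : ℕ} (φ : FullShift d → ℝ) (n : ℕ) (x : FullShift d) : ℝ :=
  ∑ k ∈ Finset.range n, φ ((shift d)^[k] x)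

open Classical in
/-- The `n`-th partition function `Z_n(φ)` of `X`. -/
def Zfun {d : ℕ} (X : Set (FullShift d)) (φ : FullShift d → ℝ) (n : ℕ) : ℝ :=
  ∑ w : Fin n → Fin d,
    if (X ∩ cyl w).Nonempty then Real.exp (sSup (birkhoff φ n '' (X ∩ cyl w))) else 0

/-- Topological pressure `P_top(X,φ) = lim (1/n) log Z_n(φ) = inf_n (1/n) log Z_n(φ)`. -/
def pressure {d : ℕ} (X : Set (FullShift d)) (φ : FullShift d → ℝ) : ℝ :=
  ⨅ n : ℕ, (1 / (n + 1 : ℝ)) * Real.log (Zfun X φ (n + 1))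

/-- Topological entropy `h_top(X) = inf_n (1/n) log |L(X,n)|`. -/
def entTop {d : ℕ} (X : Set (FullShift d)) : ℝ :=
  ⨅ n : ℕ, (1 / (n + 1 : ℝ)) * Real.log ((langSet X (n + 1)).ncard : ℝ)

/-- The shift-invariant Borel probability measures giving `X` full measure. -/
def InvProb {d : ℕ} (X : Set (FullShift d)) : Set (Measure (FullShift d)) :=
  {μ | IsProbabilityMeasure μ ∧ μ.map (shift d) = μ ∧ μ X = 1}

/-- Measure-theoretic (Kolmogorov–Sinai) entropy of an invariant measure,
computed via cylinder sets: `h_μ = lim -(1/n) Σ_{|w|=n} μ[w] log μ[w]`. -/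
def mEnt {d : ℕ} (μ : Measure (FullShift d)) : ℝ :=
  Filter.liminf
    (fun n : ℕ => (1 / (n + 1 : ℝ)) *
      ∑ w : Fin (n + 1) → Fin d, Real.negMulLog (μ (cyl w)).toReal)
    Filter.atTop

/-- The free energy `h_μ(f) + ∫ φ dμ` of an invariant measure. -/
def freeEnergy {d : ℕ} (μ : Measure (FullShift d)) (φ : FullShift d → ℝ) : ℝ :=
  mEnt μ + ∫ x, φ x ∂μ

/-- `sup { ∫ φ dμ : μ ∈ M_X }`. -/
def intAvg {d : ℕ} (X : Set (FullShift d)) (φ : FullShift d → ℝ) : ℝ :=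
  sSup {r | ∃ μ ∈ InvProb X, r = ∫ x, φ x ∂μ}

/-- `μ` is an equilibrium state of `φ` on `X`. -/
def IsEqState {d : ℕ} (X : Set (FullShift d)) (φ : FullShift d → ℝ)
    (μ : Measure (FullShift d)) : Prop :=
  μ ∈ InvProb X ∧ freeEnergy μ φ = pressure X φ

/-- `p : ℤ → ℤ` parses `x` into consecutive generator blocks from `𝒢`:
the block of `x` from `p j` to `p (j+1) - 1` is a generator, for every `j`. -/
def IsParsing {d : ℕ} (𝒢 : Set (List (Fin d))) (x : FullShift d) (p : ℤ → ℤ) : Prop :=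
  StrictMono p ∧ ∀ j : ℤ, ∃ g ∈ 𝒢,
    p (j + 1) = p j + g.length ∧ ∀ (l : ℕ) (hl : l < g.length), x (p j + l) = g[l]

/-- `X_seq`: the set of bi-infinite concatenations of generators. -/
def Xseq {d : ℕ} (𝒢 : Set (List (Fin d))) : Set (FullShift d) :=
  {x | ∃ p : ℤ → ℤ, IsParsing 𝒢 x p}

/-- The coded shift generated by `𝒢`: the closure of `X_seq`. -/
def codedShift {d : ℕ} (𝒢 : Set (List (Fin d))) : Set (FullShift d) :=
  closure (Xseq 𝒢)

/-- `𝒢` is a unique representation: every `x ∈ X_seq` admits exactly one parsing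
into generator blocks (i.e. the set of cut points is uniquely determined). -/
def UniqueRep {d : ℕ} (𝒢 : Set (List (Fin d))) : Prop :=
  ∀ (x : FullShift d) (p q : ℤ → ℤ),
    IsParsing 𝒢 x p → IsParsing 𝒢 x q → Set.range p = Set.range q

/-- `P_seq(φ) = sup { h_μ + ∫φ dμ : μ ∈ M_X, μ(Xs) = 1 }`. -/
def PseqOf {d : ℕ} (X Xs : Set (FullShift d)) (φ : FullShift d → ℝ) : ℝ :=
  sSup {r | ∃ μ ∈ InvProb X, μ Xs = 1 ∧ r = freeEnergy μ φ}

/-- `P_lim(φ) = sup { h_μ + ∫φ dμ : μ ∈ M_X, μ(X \ Xs) = 1 }`. -/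
def PlimOf {d : ℕ} (X Xs : Set (FullShift d)) (φ : FullShift d → ℝ) : ℝ :=
  sSup {r | ∃ μ ∈ InvProb X, μ (X \ Xs) = 1 ∧ r = freeEnergy μ φ}

/-- `φ` has strict full sequential pressure: `P_seq(φ) > P_lim(φ)`. -/
def StrictFSP {d : ℕ} (X Xs : Set (FullShift d)) (φ : FullShift d → ℝ) : Prop :=
  PlimOf X Xs φ < PseqOf X Xs φ

/-- `φ ∈ FSSP(X)`: `φ` lies in the sup-norm closure (within `C(X,ℝ)`) of the
set of continuous potentials with strict full sequential pressure. -/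
def InFSSP {d : ℕ} (X Xs : Set (FullShift d)) (φ : FullShift d → ℝ) : Prop :=
  ∀ ε : ℝ, 0 < ε → ∃ ψ : FullShift d → ℝ, ContinuousOn ψ X ∧
    (∀ x ∈ X, |φ x - ψ x| ≤ ε) ∧ StrictFSP X Xs ψ

/-- The invariant probability measure equidistributed on the (period-`ℓ`) orbit of `y`. -/
def periodicMeasure {d : ℕ} (y : FullShift d) (ℓ : ℕ) : Measure (FullShift d) :=
  (ℓ : ℝ≥0∞)⁻¹ • ∑ k ∈ Finset.range ℓ, Measure.dirac ((shift d)^[k] y)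

/-- `y` is periodic with period `ℓ ≥ 1`. -/
def IsPeriodicOf {d : ℕ} (y : FullShift d) (ℓ : ℕ) : Prop :=
  1 ≤ ℓ ∧ (shift d)^[ℓ] y = y

/-!
A bound on Birkhoff averages over `X` depends only on finitely many words. By Krylov–Bogolyubov,
for `b < c` all Birkhoff sums of some fixed length `N` over points of `X` are at most `N c`, and by
uniform continuity of `φ` any shift space `Z` with the same words of a length depending on `η > 0`
obeys this bound with `c + η` in place of `c`; cutting long orbit segments into pieces of length `N`
then gives `P_top(Z, φ) ≤ h_top(Z) + c + η`.

Finitely many words do not bound the entropy from below: in the Rauzy graph of `X` on words of a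
given length, keep one outgoing and one incoming edge per vertex. The bi-infinite walks that follow
the kept outgoing edges forwards and the kept incoming edges backwards still visit all vertices, but
the shift space they generate has linear word complexity, hence zero entropy.
-/

open SymbolicDynamics.FullShift renaming shift → shiftBy, shift_apply → shiftBy_apply,
  shift_zero → shiftBy_zero, shift_add → shiftBy_add

section BirkhoffSum

variable {Ω : Type*} {T : Ω → Ω} {φ : Ω → ℝ}

lemma abs_birkhoffSum_le {M : ℝ} (hM : ∀ x, |φ x| ≤ M) (n : ℕ) (x : Ω) :
    |birkhoffSum T φ n x| ≤ n * M := by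
  calc |birkhoffSum T φ n x|
    _ ≤ ∑ k ∈ Finset.range n, |φ (T^[k] x)| := Finset.abs_sum_le_sum_abs _ _
    _ ≤ ∑ _k ∈ Finset.range n, M := Finset.sum_le_sum fun k _ => hM _
    _ = n * M := by simp

lemma birkhoffSum_mul_le {A : Set Ω} (hA : Set.MapsTo T A A) {N : ℕ} {c : ℝ}
    (hc : ∀ x ∈ A, birkhoffSum T φ N x ≤ N * c) (q : ℕ) :
    ∀ x ∈ A, birkhoffSum T φ (q * N) x ≤ q * (N * c) := by
  induction q with
  | zero => simp
  | succ q ih =>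
    intro x hx
    rw [Nat.succ_mul, birkhoffSum_add]
    push_cast
    linarith [ih x hx, hc _ (hA.iterate (q * N) hx)]

end BirkhoffSum

lemma exists_abs_le_of_continuous {Ω : Type*} [TopologicalSpace Ω] [CompactSpace Ω] {φ : Ω → ℝ}
    (hφ : Continuous φ) : ∃ M : ℝ, ∀ x, |φ x| ≤ M := by
  obtain ⟨M, hM⟩ := isCompact_univ.exists_bound_of_continuousOn hφ.continuousOn
  exact ⟨M, fun x => hM x trivial⟩

section KrylovBogolyubov

lemma tendsto_birkhoffAverage_comp_sub {Ω : Type*} [TopologicalSpace Ω] [CompactSpace Ω]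
    {T : Ω → Ω} {ι : Type*} {l : Filter ι} {N : ι → ℕ}
    (hN : Tendsto N l atTop) {φ : Ω → ℝ} (hφ : Continuous φ) (x : ι → Ω) :
    Tendsto (fun i => birkhoffAverage ℝ T (φ ∘ T) (N i) (x i) -
      birkhoffAverage ℝ T φ (N i) (x i)) l (𝓝 0) := by
  obtain ⟨M, hM⟩ := exists_abs_le_of_continuous hφ
  have hbound : ∀ i, ‖birkhoffAverage ℝ T (φ ∘ T) (N i) (x i) -
      birkhoffAverage ℝ T φ (N i) (x i)‖ ≤ (M + M) / N i := fun i => by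
    have hcomp : birkhoffAverage ℝ T (φ ∘ T) (N i) (x i) =
        birkhoffAverage ℝ T φ (N i) (T (x i)) := by
      simp only [birkhoffAverage, birkhoffSum, Function.comp_apply,
        ← Function.iterate_succ_apply', Function.iterate_succ_apply]
    rw [hcomp, ← dist_eq_norm, dist_birkhoffAverage_apply_birkhoffAverage]
    gcongr
    exact (abs_sub _ _).trans (add_le_add (hM _) (hM _))
  exact squeeze_zero_norm hbound
    (tendsto_const_nhds.div_atTop (tendsto_natCast_atTop_atTop.comp hN))

variable {Ω : Type*} [MeasurableSpace Ω]

/-- The empirical measure of the orbit segment `x, T x, …, T^[n - 1] x`, a probability measure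
for `n ≠ 0`. -/
def empiricalMeasure (T : Ω → Ω) (n : ℕ) (x : Ω) : Measure Ω :=
  (n : ℝ≥0∞)⁻¹ • ∑ k ∈ Finset.range n, Measure.dirac (T^[k] x)

lemma integral_empiricalMeasure [MeasurableSingletonClass Ω] (T : Ω → Ω) (φ : Ω → ℝ) (n : ℕ)
    (x : Ω) : ∫ y, φ y ∂(empiricalMeasure T n x) = birkhoffAverage ℝ T φ n x := by
  rw [empiricalMeasure, integral_smul_measure, integral_finsetSum_measure]
  · simp [birkhoffAverage, birkhoffSum]
  · exact fun k _ => integrable_dirac (by simp)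

variable {T : Ω → Ω} {A : Set Ω}

lemma empiricalMeasure_apply_eq_one (hA : Set.MapsTo T A A) {n : ℕ} (hn : n ≠ 0) {x : Ω}
    (hx : x ∈ A) : empiricalMeasure T n x A = 1 := by
  have hmem : ∀ k, T^[k] x ∈ A := fun k => hA.iterate k hx
  simp only [empiricalMeasure, Measure.smul_apply, Measure.finsetSum_apply,
    Measure.dirac_apply_of_mem (hmem _), Finset.sum_const, Finset.card_range, smul_eq_mul,
    nsmul_eq_mul, mul_one]
  exact ENNReal.inv_mul_cancel (Nat.cast_ne_zero.2 hn) (ENNReal.natCast_ne_top n)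

lemma isProbabilityMeasure_empiricalMeasure {n : ℕ} (hn : n ≠ 0) (x : Ω) :
    IsProbabilityMeasure (empiricalMeasure T n x) :=
  ⟨empiricalMeasure_apply_eq_one (Set.mapsTo_univ T _) hn trivial⟩

variable [TopologicalSpace Ω] [BorelSpace Ω] [HasOuterApproxClosed Ω]

lemma measurePreserving_of_forall_integral_comp_eq (hT : Continuous T) (μ : Measure Ω)
    [IsFiniteMeasure μ]
    (h : ∀ φ : BoundedContinuousFunction Ω ℝ, ∫ x, φ (T x) ∂μ = ∫ x, φ x ∂μ) :
    MeasurePreserving T μ μ := by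
  refine ⟨hT.measurable, ext_of_forall_integral_eq_of_IsFiniteMeasure fun φ => ?_⟩
  rw [integral_map hT.measurable.aemeasurable φ.continuous.aestronglyMeasurable]
  exact h φ

variable [CompactSpace Ω] [T2Space Ω]

lemma exists_measurePreserving_tendsto_birkhoffAverage (hT : Continuous T) (hA : IsClosed A)
    (hTA : Set.MapsTo T A A) {ι : Type*} (l : Ultrafilter ι) {N : ι → ℕ}
    (hN₀ : ∀ i, N i ≠ 0) (hN : Tendsto N l atTop) {x : ι → Ω} (hx : ∀ i, x i ∈ A) :
    ∃ μ : Measure Ω, IsProbabilityMeasure μ ∧ MeasurePreserving T μ μ ∧ μ A = 1 ∧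
      ∀ φ : Ω → ℝ, Continuous φ →
        Tendsto (fun i => birkhoffAverage ℝ T φ (N i) (x i)) l (𝓝 (∫ y, φ y ∂μ)) := by
  let ν : ι → ProbabilityMeasure Ω := fun i =>
    ⟨empiricalMeasure T (N i) (x i), isProbabilityMeasure_empiricalMeasure (hN₀ i) _⟩
  let μ : ProbabilityMeasure Ω := (l.map ν).lim
  have hlim : Tendsto ν l (𝓝 μ) := (l.map ν).le_nhds_lim
  have htendsto : ∀ φ : Ω → ℝ, Continuous φ →
      Tendsto (fun i => birkhoffAverage ℝ T φ (N i) (x i)) l (𝓝 (∫ y, φ y ∂(μ : Measure Ω))) := by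
    intro φ hφ
    have h := ProbabilityMeasure.tendsto_iff_forall_integral_tendsto.1 hlim
      (BoundedContinuousFunction.mkOfCompact ⟨φ, hφ⟩)
    simpa [ν, integral_empiricalMeasure] using h
  refine ⟨μ, inferInstance, ?_, ?_, htendsto⟩
  · exact measurePreserving_of_forall_integral_comp_eq hT _ fun φ => sub_eq_zero.1 <|
      tendsto_nhds_unique
        ((htendsto _ (φ.continuous.comp hT)).sub (htendsto φ φ.continuous))
        (tendsto_birkhoffAverage_comp_sub hN φ.continuous x)
  · have hν : ∀ i, (ν i : Measure Ω) A = 1 :=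
      fun i => empiricalMeasure_apply_eq_one hTA (hN₀ i) (hx i)
    have h := ProbabilityMeasure.limsup_measure_closed_le_of_tendsto hlim hA
    simp only [hν, limsup_const] at h
    exact le_antisymm prob_le_one h

theorem eventually_forall_birkhoffAverage_lt (hT : Continuous T) (hA : IsClosed A)
    (hTA : Set.MapsTo T A A) {φ : Ω → ℝ} (hφ : Continuous φ) {c : ℝ}
    (hc : ∀ μ : Measure Ω, IsProbabilityMeasure μ → MeasurePreserving T μ μ → μ A = 1 →
      ∫ x, φ x ∂μ < c) :
    ∀ᶠ n in atTop, ∀ x ∈ A, birkhoffAverage ℝ T φ n x < c := by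
  by_contra! h
  choose N hN x hxA hx using frequently_atTop'.1 h
  obtain ⟨μ, hμ, hμT, hμA, htendsto⟩ :=
    exists_measurePreserving_tendsto_birkhoffAverage hT hA hTA (hyperfilter ℕ)
      (fun n => (n.zero_le.trans_lt (hN n)).ne')
      ((tendsto_atTop_mono (fun n => (hN n).le) tendsto_id).mono_left Nat.hyperfilter_le_atTop) hxA
  exact (hc μ hμ hμT hμA).not_ge
    (ge_of_tendsto (htendsto φ hφ) (Eventually.of_forall hx))

end KrylovBogolyubov

section UniformContinuity

variable {α E : Type*} [TopologicalSpace α] [DiscreteTopology α] [Finite α] [PseudoMetricSpace E]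

lemma exists_finset_forall_eqOn_dist_lt {ι : Type*} {φ : (ι → α) → E} (hφ : Continuous φ) {ε : ℝ}
    (hε : 0 < ε) : ∃ s : Finset ι, ∀ x y, Set.EqOn x y s → dist (φ x) (φ y) < ε := by
  let _ : UniformSpace α := uniformSpaceOfCompactR1
  have hunif := CompactSpace.uniformContinuous_of_continuous hφ (Metric.dist_mem_uniformity hε)
  simp only [Pi.uniformity, DiscreteUniformity.eq_principal_setRelId, comap_principal] at hunif
  obtain ⟨s, hs, hsub⟩ := (hasBasis_iInf_principal_finite _).mem_iff.1 hunif
  refine ⟨hs.toFinset, fun x y hxy => ?_⟩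
  exact @hsub (x, y) (Set.mem_iInter₂.2 fun i hi => hxy (by simpa using hi))

lemma exists_window_forall_eqOn_dist_lt {φ : (ℤ → α) → E} (hφ : Continuous φ) {ε : ℝ}
    (hε : 0 < ε) :
    ∃ r : ℕ, ∀ x y : ℤ → α, Set.EqOn x y (Set.Icc (-(r : ℤ)) r) → dist (φ x) (φ y) < ε := by
  obtain ⟨s, hs⟩ := exists_finset_forall_eqOn_dist_lt hφ hε
  refine ⟨s.sup Int.natAbs, fun x y hxy => hs x y (hxy.mono fun k hk => ?_)⟩
  have h : k.natAbs ≤ s.sup Int.natAbs := Finset.le_sup hk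
  exact Set.mem_Icc.2 (by omega)

end UniformContinuity

section ShiftSpace

variable {d : ℕ} {X Z : Set (FullShift d)}

lemma continuous_shift (d : ℕ) : Continuous (shift d) :=
  continuous_pi fun k => continuous_apply (k + 1)

lemma shift_eq_shiftBy (d : ℕ) : shift d = shiftBy (1 : ℤ) := by
  funext x k
  simp only [shift, shiftBy_apply, add_comm]

lemma shift_iterate_eq_shiftBy (n : ℕ) : (shift d)^[n] = shiftBy (n : ℤ) := by
  induction n with
  | zero => ext; simp
  | succ n ih =>
    funext x
    rw [Function.iterate_succ_apply', ih, shift_eq_shiftBy, ← shiftBy_add, Nat.cast_succ]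

lemma IsShiftSpace.mapsTo_shift (hX : IsShiftSpace X) : Set.MapsTo (shift d) X X :=
  Set.mapsTo_iff_image_subset.2 hX.2.2.le

lemma IsShiftSpace.shiftBy_mem (hX : IsShiftSpace X) {x : FullShift d} (hx : x ∈ X) (k : ℤ) :
    shiftBy k x ∈ X := by
  induction k using Int.induction_on with
  | zero => simpa using hx
  | succ k ih =>
    rw [shiftBy_add, ← shift_eq_shiftBy]
    exact hX.mapsTo_shift ih
  | pred k ih =>
    rw [← hX.2.2] at ih
    obtain ⟨y, hy, hyx⟩ := ih
    have hy' : y = shiftBy (-(k : ℤ) - 1) x := by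
      have h := congrArg (shiftBy (-1)) hyx
      rwa [shift_eq_shiftBy, ← shiftBy_add, ← shiftBy_add, add_neg_cancel,
        shiftBy_zero, ← sub_eq_add_neg] at h
    exact hy' ▸ hy

lemma IsShiftSpace.mem_langSet_of_mem (hX : IsShiftSpace X) {x : FullShift d} (hx : x ∈ X) (k : ℤ)
    (n : ℕ) : (fun i : Fin n => x (k + (i : ℕ))) ∈ langSet X n :=
  ⟨shiftBy k x, hX.shiftBy_mem hx k, fun _ => rfl⟩

lemma langSet_subset_of_le {m n : ℕ} (hmn : m ≤ n) (h : langSet X n ⊆ langSet Z n) :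
    langSet X m ⊆ langSet Z m := by
  rintro w ⟨x, hxX, hxw⟩
  obtain ⟨z, hzZ, hzx⟩ := h ⟨x, hxX, fun i : Fin n => rfl⟩
  exact ⟨z, hzZ, fun i => (hzx (i.castLE hmn)).trans (hxw i)⟩

lemma langSet_eq_of_le {m n : ℕ} (hmn : m ≤ n) (h : langSet X n = langSet Z n) :
    langSet X m = langSet Z m :=
  (langSet_subset_of_le hmn h.le).antisymm (langSet_subset_of_le hmn h.ge)

lemma langSet_nonempty (hX : X.Nonempty) (n : ℕ) : (langSet X n).Nonempty :=
  let ⟨x, hx⟩ := hX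
  ⟨fun i => x (i : ℕ), x, hx, fun _ => rfl⟩

end ShiftSpace

section Pressure

variable {d : ℕ} {Z : Set (FullShift d)} {φ : FullShift d → ℝ} {M : ℝ}

lemma birkhoff_eq_birkhoffSum (φ : FullShift d → ℝ) : birkhoff φ = birkhoffSum (shift d) φ :=
  rfl

lemma Zfun_le_ncard_langSet_mul_exp {n : ℕ} {s : ℝ} (hs : ∀ y ∈ Z, birkhoff φ n y ≤ s) :
    Zfun Z φ n ≤ (langSet Z n).ncard * Real.exp s := by
  classical
  rw [← Nat.card_coe_set_eq, Nat.card_eq_fintype_card, Fintype.card_subtype, ← nsmul_eq_mul,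
    ← Finset.sum_const, Finset.sum_filter, Zfun]
  refine Finset.sum_le_sum fun w _ => ?_
  by_cases h : w ∈ langSet Z n
  · rw [if_pos h, if_pos (show (Z ∩ cyl w).Nonempty from h)]
    exact Real.exp_le_exp.2 (csSup_le (h.image _) (by rintro _ ⟨y, hy, rfl⟩; exact hs y hy.1))
  · rw [if_neg h, if_neg (show ¬(Z ∩ cyl w).Nonempty from h)]

lemma exp_birkhoff_le_Zfun (hM : ∀ x, |φ x| ≤ M) {y : FullShift d} (hy : y ∈ Z) (n : ℕ) :
    Real.exp (birkhoff φ n y) ≤ Zfun Z φ n := by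
  classical
  let w : Fin n → Fin d := fun i => y (i : ℕ)
  have hyw : y ∈ Z ∩ cyl w := ⟨hy, fun _ => rfl⟩
  have hbdd : BddAbove (birkhoff φ n '' (Z ∩ cyl w)) :=
    ⟨n * M, by rintro _ ⟨z, -, rfl⟩; exact (le_abs_self _).trans (abs_birkhoffSum_le hM n z)⟩
  calc Real.exp (birkhoff φ n y)
    _ ≤ Real.exp (sSup (birkhoff φ n '' (Z ∩ cyl w))) :=
      Real.exp_le_exp.2 (le_csSup hbdd (Set.mem_image_of_mem _ hyw))
    _ = if (Z ∩ cyl w).Nonempty then Real.exp (sSup (birkhoff φ n '' (Z ∩ cyl w))) else 0 :=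
      (if_pos ⟨y, hyw⟩).symm
    _ ≤ Zfun Z φ n := by
      rw [Zfun]
      exact Finset.single_le_sum
        (f := fun w => if (Z ∩ cyl w).Nonempty then
          Real.exp (sSup (birkhoff φ n '' (Z ∩ cyl w))) else 0)
        (fun w _ => by split_ifs <;> positivity) (Finset.mem_univ w)

lemma pressure_le_log_Zfun_div (hZ : Z.Nonempty) (hM : ∀ x, |φ x| ≤ M) {n : ℕ} (hn : n ≠ 0) :
    pressure Z φ ≤ Real.log (Zfun Z φ n) / n := by
  obtain ⟨y, hy⟩ := hZ
  obtain ⟨k, rfl⟩ := Nat.exists_eq_succ_of_ne_zero hn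
  have hlower : ∀ k : ℕ, -M ≤ 1 / (k + 1 : ℝ) * Real.log (Zfun Z φ (k + 1)) := fun k => by
    have hlog : birkhoff φ (k + 1) y ≤ Real.log (Zfun Z φ (k + 1)) :=
      (Real.le_log_iff_exp_le ((Real.exp_pos _).trans_le (exp_birkhoff_le_Zfun hM hy _))).2
        (exp_birkhoff_le_Zfun hM hy _)
    have habs := (abs_le.1 (abs_birkhoffSum_le (T := shift d) hM (k + 1) y)).1
    rw [← birkhoff_eq_birkhoffSum] at habs
    push_cast at habs
    rw [one_div, le_inv_mul_iff₀ (by positivity)]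
    linarith
  refine (ciInf_le ⟨-M, Set.forall_mem_range.2 hlower⟩ k).trans_eq ?_
  rw [Nat.succ_eq_add_one, Nat.cast_succ, one_div_mul_eq_div]

lemma ncard_langSet_pos (hZ : Z.Nonempty) (n : ℕ) : 0 < (langSet Z n).ncard :=
  (Set.ncard_pos (Set.toFinite _)).2 (langSet_nonempty hZ n)

lemma ncard_langSet_add_le (hZ : Set.MapsTo (shift d) Z Z) (m n : ℕ) :
    (langSet Z (m + n)).ncard ≤ (langSet Z m).ncard * (langSet Z n).ncard := by
  rw [← Set.ncard_prod]
  have hsub : langSet Z (m + n) ⊆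
      (fun p => Fin.append p.1 p.2) '' (langSet Z m ×ˢ langSet Z n) := by
    rintro w ⟨x, hxZ, hxw⟩
    refine ⟨(fun i => w (i.castAdd n), fun j => w (j.natAdd m)),
      ⟨⟨x, hxZ, fun i => hxw (i.castAdd n)⟩, (shift d)^[m] x, hZ.iterate m hxZ, fun j => ?_⟩,
      Fin.append_castAdd_natAdd⟩
    rw [shift_iterate_eq_shiftBy, shiftBy_apply, ← Nat.cast_add]
    exact hxw (j.natAdd m)
  exact (Set.ncard_le_ncard hsub (Set.toFinite _)).trans (Set.ncard_image_le (Set.toFinite _))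

lemma ncard_langSet_mul_le (hZ : Set.MapsTo (shift d) Z Z) (n q : ℕ) :
    (langSet Z (n * q)).ncard ≤ (langSet Z n).ncard ^ q := by
  induction q with
  | zero => exact Set.ncard_le_one_of_subsingleton (α := Fin 0 → Fin d) _
  | succ q ih =>
    rw [Nat.mul_succ, pow_succ]
    exact (ncard_langSet_add_le hZ _ _).trans (Nat.mul_le_mul_right _ ih)

theorem pressure_le_entTop_add (hZ : Z.Nonempty) (hinv : Set.MapsTo (shift d) Z Z)
    (hM : ∀ x, |φ x| ≤ M) {N : ℕ} (hN : N ≠ 0) {c : ℝ} (hc : ∀ y ∈ Z, birkhoff φ N y ≤ N * c) :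
    pressure Z φ ≤ entTop Z + c := by
  rw [← sub_le_iff_le_add]
  refine le_ciInf fun q => ?_
  have hn : (q + 1) * N ≠ 0 := mul_ne_zero q.succ_ne_zero hN
  have hcard : 0 < ((langSet Z (q + 1)).ncard : ℝ) := Nat.cast_pos.2 (ncard_langSet_pos hZ _)
  have hZfun_pos : 0 < Zfun Z φ ((q + 1) * N) :=
    let ⟨y, hy⟩ := hZ
    (Real.exp_pos _).trans_le (exp_birkhoff_le_Zfun hM hy _)
  have hZfun_le : Zfun Z φ ((q + 1) * N) ≤
      ((langSet Z (q + 1)).ncard : ℝ) ^ N * Real.exp ((q + 1) * (N * c)) := by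
    refine (Zfun_le_ncard_langSet_mul_exp (s := (q + 1) * (N * c)) ?_).trans ?_
    · exact_mod_cast birkhoffSum_mul_le hinv hc (q + 1)
    · gcongr
      exact_mod_cast ncard_langSet_mul_le hinv (q + 1) N
  have hlog : Real.log (Zfun Z φ ((q + 1) * N)) ≤
      N * Real.log (langSet Z (q + 1)).ncard + (q + 1) * (N * c) := by
    refine (Real.log_le_log hZfun_pos hZfun_le).trans_eq ?_
    rw [Real.log_mul (by positivity) (by positivity), Real.log_pow, Real.log_exp]
  rw [sub_le_iff_le_add]
  refine (pressure_le_log_Zfun_div hZ hM hn).trans ?_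
  have : (0 : ℝ) < N := Nat.cast_pos.2 (Nat.pos_of_ne_zero hN)
  push_cast
  rw [div_le_iff₀ (by positivity)]
  refine hlog.trans_eq ?_
  field_simp

end Pressure

section ZeroEntropy

lemma isLittleO_log_natCast_of_isBigO_pow {f : ℕ → ℝ} (hf : ∀ n, 1 ≤ f n) {p : ℕ}
    (h : f =O[atTop] fun n : ℕ => (n : ℝ) ^ p) :
    (fun n => Real.log (f n)) =o[atTop] fun n : ℕ => (n : ℝ) := by
  obtain ⟨C, hC, hbound⟩ := h.exists_pos
  have hO : (fun n => Real.log (f n)) =O[atTop] fun n : ℕ => Real.log C + p * Real.log n := by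
    refine Asymptotics.IsBigO.of_norm_eventuallyLE ?_
    filter_upwards [hbound.bound, eventually_gt_atTop 0] with n hn hn0
    have hn' : (0 : ℝ) < n := Nat.cast_pos.2 hn0
    rw [Real.norm_of_nonneg (zero_le_one.trans (hf n)), Real.norm_of_nonneg (by positivity)] at hn
    have hlog := Real.log_le_log (zero_lt_one.trans_le (hf n)) hn
    rw [Real.log_mul hC.ne' (by positivity), Real.log_pow] at hlog
    rwa [Real.norm_of_nonneg (Real.log_nonneg (hf n))]
  refine hO.trans_isLittleO (Asymptotics.IsLittleO.add ?_ ?_)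
  · exact Asymptotics.isLittleO_const_left.2 (.inr
      (tendsto_norm_atTop_atTop.comp tendsto_natCast_atTop_atTop))
  · exact (Real.isLittleO_log_id_atTop.comp_tendsto tendsto_natCast_atTop_atTop).const_mul_left _

lemma entTop_eq_zero_of_isLittleO {d : ℕ} {Z : Set (FullShift d)}
    (h : (fun n => Real.log (langSet Z n).ncard) =o[atTop] fun n : ℕ => (n : ℝ)) :
    entTop Z = 0 := by
  have hnonneg : ∀ n : ℕ, 0 ≤ 1 / (n + 1 : ℝ) * Real.log (langSet Z (n + 1)).ncard :=
    fun n => mul_nonneg (by positivity) (Real.log_natCast_nonneg _)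
  refine le_antisymm ?_ (le_ciInf hnonneg)
  refine ge_of_tendsto (h.tendsto_div_nhds_zero.comp (tendsto_add_atTop_nat 1))
    (Eventually.of_forall fun n => ?_)
  refine (ciInf_le ⟨0, Set.forall_mem_range.2 hnonneg⟩ n).trans_eq ?_
  simp only [Function.comp_apply, Nat.cast_succ, one_div_mul_eq_div]

theorem entTop_eq_zero_of_isBigO_pow {d : ℕ} {Z : Set (FullShift d)} (hZ : Z.Nonempty) {p : ℕ}
    (h : (fun n => ((langSet Z n).ncard : ℝ)) =O[atTop] fun n : ℕ => (n : ℝ) ^ p) :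
    entTop Z = 0 :=
  entTop_eq_zero_of_isLittleO <| isLittleO_log_natCast_of_isBigO_pow
    (fun n => Nat.one_le_cast.2 (ncard_langSet_pos hZ n)) h

end ZeroEntropy

section WindowTransfer

variable {d : ℕ} {X Z : Set (FullShift d)} {φ : FullShift d → ℝ}

lemma exists_eqOn_Ico_of_langSet_subset (hX : IsShiftSpace X) (hZ : IsShiftSpace Z) {n : ℕ}
    (h : langSet Z n ⊆ langSet X n) {z : FullShift d} (hz : z ∈ Z) (a : ℤ) :
    ∃ x ∈ X, Set.EqOn z x (Set.Ico a (a + n)) := by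
  obtain ⟨x, hx, hxz⟩ := h (hZ.mem_langSet_of_mem hz a n)
  refine ⟨shiftBy (-a) x, hX.shiftBy_mem hx _, fun j hj => ?_⟩
  obtain ⟨i, rfl⟩ : ∃ i : ℕ, j = a + i := Int.le.dest hj.1 |>.imp fun _ => Eq.symm
  have hi : i < n := by have := hj.2; omega
  rw [shiftBy_apply, neg_add_cancel_left]
  exact (hxz ⟨i, hi⟩).symm

lemma birkhoff_le_add_of_eqOn_Ico {r : ℕ} {η : ℝ}
    (hr : ∀ x y : FullShift d, Set.EqOn x y (Set.Icc (-(r : ℤ)) r) → dist (φ x) (φ y) < η)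
    {N : ℕ} {x y : FullShift d} (hxy : Set.EqOn x y (Set.Ico (-(r : ℤ)) (N + r))) :
    birkhoff φ N x ≤ birkhoff φ N y + N * η := by
  calc birkhoff φ N x
    _ ≤ ∑ k ∈ Finset.range N, (φ ((shift d)^[k] y) + η) := Finset.sum_le_sum fun k hk => by
      have hk' := Finset.mem_range.1 hk
      have hdist := hr ((shift d)^[k] x) ((shift d)^[k] y) fun j hj => by
        simp only [shift_iterate_eq_shiftBy, shiftBy_apply]
        obtain ⟨hj₁, hj₂⟩ := Set.mem_Icc.1 hj
        exact hxy (Set.mem_Ico.2 ⟨by omega, by omega⟩)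
      linarith [(le_abs_self _).trans_lt (Real.dist_eq _ _ ▸ hdist)]
    _ = birkhoff φ N y + N * η := by simp [birkhoff, Finset.sum_add_distrib]

lemma birkhoff_le_of_langSet_subset (hX : IsShiftSpace X) (hZ : IsShiftSpace Z) {r : ℕ} {η : ℝ}
    (hr : ∀ x y : FullShift d, Set.EqOn x y (Set.Icc (-(r : ℤ)) r) → dist (φ x) (φ y) < η)
    {N : ℕ} {c : ℝ} (hc : ∀ x ∈ X, birkhoff φ N x ≤ N * c)
    (hlang : langSet Z (N + 2 * r) ⊆ langSet X (N + 2 * r)) :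
    ∀ z ∈ Z, birkhoff φ N z ≤ N * (c + η) := by
  intro z hz
  obtain ⟨x, hx, hzx⟩ := exists_eqOn_Ico_of_langSet_subset hX hZ hlang hz (-r)
  have hle := birkhoff_le_add_of_eqOn_Ico hr
    (hzx.mono (Set.Ico_subset_Ico_right (by push_cast; omega)) : Set.EqOn z x
      (Set.Ico (-(r : ℤ)) (N + r)))
  linarith [hc x hx]

end WindowTransfer

section Walk

variable {V : Type*} {F B : V → V}

/-- The bi-infinite walk through `v` that follows `F` at positive times and `B` at negative
times. -/
def walk (F B : V → V) (v : V) (k : ℤ) : V := F^[k.toNat] (B^[(-k).toNat] v)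

lemma walk_add_of_nonneg (v : V) {j k : ℤ} (hj : 0 ≤ j) (hk : 0 ≤ k) :
    walk F B v (j + k) = walk F B (walk F B v j) k := by
  lift j to ℕ using hj
  lift k to ℕ using hk
  simp only [walk, ← Nat.cast_add, Int.toNat_natCast, Int.toNat_neg_natCast,
    Function.iterate_zero, id_eq, ← Function.iterate_add_apply, add_comm]

lemma walk_add_of_nonpos (v : V) {j k : ℤ} (hj : j ≤ 0) (hk : k ≤ 0) :
    walk F B v (j + k) = walk F B (walk F B v j) k := by
  obtain ⟨j, rfl⟩ := Int.exists_eq_neg_ofNat hj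
  obtain ⟨k, rfl⟩ := Int.exists_eq_neg_ofNat hk
  simp only [walk, ← neg_add, ← Nat.cast_add, neg_neg, Int.toNat_natCast, Int.toNat_neg_natCast,
    Function.iterate_zero, id_eq, ← Function.iterate_add_apply, add_comm]

lemma rel_walk_walk_add_one {R : V → V → Prop} (hF : ∀ v, R v (F v)) (hB : ∀ v, R (B v) v) (v : V)
    (k : ℤ) : R (walk F B v k) (walk F B v (k + 1)) := by
  rcases le_or_gt 0 k with hk | hk
  · rw [walk_add_of_nonneg v hk zero_le_one]
    exact hF _
  · have hstep := walk_add_of_nonpos (F := F) (B := B) v (j := k + 1) (k := -1) hk (by norm_num)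
    rw [add_neg_cancel_right] at hstep
    rw [hstep]
    exact hB _

/-- Restarting the walk at the first (last) vertex of a window at positive (negative) times does not
change the word read there, so only windows starting in `[-n, 0]` need to be counted. -/
lemma ncard_walk_words_le [Finite V] {α : Type*} (F B : V → V) (π : V → α) (n : ℕ) :
    {u : Fin n → α | ∃ v k, ∀ i, u i = π (walk F B v (k + (i : ℕ)))}.ncard ≤
      Nat.card V * (n + 1) := by
  let word : V × Fin (n + 1) → Fin n → α := fun p i => π (walk F B p.1 (-(p.2 : ℕ) + (i : ℕ)))
  have hsub : {u : Fin n → α | ∃ v k, ∀ i, u i = π (walk F B v (k + (i : ℕ)))} ⊆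
      Set.range word := by
    rintro u ⟨v, k, hu⟩
    rcases le_or_gt 0 k with hk | hk
    · refine ⟨(walk F B v k, 0), funext fun i => ?_⟩
      simp [word, hu, walk_add_of_nonneg v hk]
    rcases le_or_gt (-n : ℤ) k with hkn | hkn
    · obtain ⟨j, rfl⟩ := Int.exists_eq_neg_ofNat hk.le
      exact ⟨(v, ⟨j, by omega⟩), funext fun i => (hu i).symm⟩
    · refine ⟨(walk F B v (k + n), Fin.last n), funext fun i => ?_⟩
      have hi : (-n + (i : ℕ) : ℤ) ≤ 0 := by omega
      simp [word, hu, ← walk_add_of_nonpos v (by omega : k + n ≤ 0) hi, add_assoc]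
  calc _ ≤ (Set.range word).ncard := Set.ncard_le_ncard hsub (Set.finite_range word)
    _ ≤ Nat.card (V × Fin (n + 1)) := by
      rw [← Set.image_univ, ← Set.ncard_univ]
      exact Set.ncard_image_le Set.finite_univ
    _ = Nat.card V * (n + 1) := by rw [Nat.card_prod, Nat.card_fin]

end Walk

section OrbitClosure

variable {d : ℕ} {S : Set (FullShift d)}

/-- The closure of the union of the two-sided orbits of the points of `S`; for nonempty `S` this is
the smallest shift space containing `S`. -/
def orbitClosure (S : Set (FullShift d)) : Set (FullShift d) :=
  closure {y | ∃ x ∈ S, ∃ k : ℤ, y = shiftBy k x}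

lemma isShiftSpace_orbitClosure (hS : S.Nonempty) : IsShiftSpace (orbitClosure S) := by
  refine ⟨?_, isClosed_closure, ?_⟩
  · obtain ⟨x, hx⟩ := hS
    exact ⟨shiftBy 0 x, subset_closure ⟨x, hx, 0, rfl⟩⟩
  · rw [orbitClosure,
      ← (continuous_shift d).isClosedMap.closure_image_eq_of_continuous (continuous_shift d)]
    congr 1
    ext y
    constructor
    · rintro ⟨_, ⟨x, hx, k, rfl⟩, rfl⟩
      exact ⟨x, hx, k + 1, by rw [shift_eq_shiftBy, ← shiftBy_add]⟩
    · rintro ⟨x, hx, k, rfl⟩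
      exact ⟨_, ⟨x, hx, k - 1, rfl⟩, by rw [shift_eq_shiftBy, ← shiftBy_add, sub_add_cancel]⟩

lemma isOpen_cyl {n : ℕ} (w : Fin n → Fin d) : IsOpen (cyl w) := by
  simp only [cyl, Set.ofPred_forall]
  exact isOpen_iInter_of_finite fun i =>
    (isOpen_discrete {w i}).preimage (continuous_apply (A := fun _ => Fin d) ((i : ℕ) : ℤ))

lemma mem_langSet_orbitClosure {n : ℕ} {w : Fin n → Fin d} :
    w ∈ langSet (orbitClosure S) n ↔ ∃ x ∈ S, ∃ k : ℤ, ∀ i, w i = x (k + (i : ℕ)) := by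
  rw [langSet, Set.mem_ofPred_eq, orbitClosure, closure_inter_open_nonempty_iff (isOpen_cyl w)]
  constructor
  · rintro ⟨_, ⟨x, hx, k, rfl⟩, hw⟩
    exact ⟨x, hx, k, fun i => (hw i).symm⟩
  · rintro ⟨x, hx, k, hw⟩
    exact ⟨_, ⟨x, hx, k, rfl⟩, fun i => (hw i).symm⟩

end OrbitClosure

section RauzyGraph

/-- The edge relation of the Rauzy graph on words of length `m + 1`: the last `m` letters of `v` are
the first `m` letters of `w`. -/
def RauzyAdj {α : Type*} {m : ℕ} (v w : Fin (m + 1) → α) : Prop := Fin.tail v = Fin.init w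

lemma apply_zero_of_forall_rauzyAdj {α : Type*} {m : ℕ} {p : ℤ → Fin (m + 1) → α}
    (hp : ∀ k, RauzyAdj (p k) (p (k + 1))) (k : ℤ) (i : Fin (m + 1)) :
    p (k + (i : ℕ)) 0 = p k i := by
  induction i using Fin.induction generalizing k with
  | zero => simp
  | succ i ih =>
    calc p (k + (i.succ : ℕ)) 0
      _ = p (k + 1 + (i.castSucc : ℕ)) 0 := by
        rw [Fin.val_succ, Fin.val_castSucc, Nat.cast_succ, add_assoc, add_comm (1 : ℤ)]
      _ = p (k + 1) i.castSucc := ih _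
      _ = p k i.succ := (congrFun (hp k) i).symm

variable {d m : ℕ} {X : Set (FullShift d)}

lemma rauzyAdj_word (x : FullShift d) (k : ℤ) :
    RauzyAdj (fun i : Fin (m + 1) => x (k + (i : ℕ)))
      fun i : Fin (m + 1) => x (k + 1 + (i : ℕ)) := by
  funext i
  simp only [Fin.tail, Fin.init, Fin.val_succ, Fin.val_castSucc, Nat.cast_succ]
  rw [add_assoc, add_comm (1 : ℤ)]

lemma IsShiftSpace.exists_rauzyAdj_right (hX : IsShiftSpace X) (v : langSet X (m + 1)) :
    ∃ w : langSet X (m + 1), RauzyAdj v.1 w.1 := by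
  obtain ⟨v, x, hx, hxv⟩ := v
  refine ⟨⟨_, hX.mem_langSet_of_mem hx (0 + 1) _⟩, ?_⟩
  convert rauzyAdj_word x 0 using 1
  exact funext fun i => by rw [zero_add, hxv]

lemma IsShiftSpace.exists_rauzyAdj_left (hX : IsShiftSpace X) (v : langSet X (m + 1)) :
    ∃ w : langSet X (m + 1), RauzyAdj w.1 v.1 := by
  obtain ⟨v, x, hx, hxv⟩ := v
  refine ⟨⟨_, hX.mem_langSet_of_mem hx (-1) _⟩, ?_⟩
  convert rauzyAdj_word x (-1) using 1
  exact funext fun i => by rw [neg_add_cancel, zero_add, hxv]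

theorem IsShiftSpace.exists_langSet_succ_eq_entTop_eq_zero (hX : IsShiftSpace X) (m : ℕ) :
    ∃ Z, IsShiftSpace Z ∧ langSet Z (m + 1) = langSet X (m + 1) ∧ entTop Z = 0 := by
  choose F hF using hX.exists_rauzyAdj_right (m := m)
  choose B hB using hX.exists_rauzyAdj_left (m := m)
  let point : langSet X (m + 1) → FullShift d := fun v k => (walk F B v k).1 0
  have hpoint : ∀ v k (i : Fin (m + 1)), point v (k + (i : ℕ)) = (walk F B v k).1 i := fun v =>
    apply_zero_of_forall_rauzyAdj
      (rel_walk_walk_add_one (R := fun v w => RauzyAdj v.1 w.1) hF hB v)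
  have : Nonempty (langSet X (m + 1)) := (langSet_nonempty hX.1 _).to_subtype
  have hZ : IsShiftSpace (orbitClosure (Set.range point)) :=
    isShiftSpace_orbitClosure (Set.range_nonempty point)
  have hlang : ∀ n, langSet (orbitClosure (Set.range point)) n =
      {w | ∃ v k, ∀ i : Fin n, w i = point v (k + (i : ℕ))} := fun n => by
    ext w
    simp only [mem_langSet_orbitClosure, Set.exists_range_iff, Set.mem_ofPred_eq]
  refine ⟨_, hZ, ?_, ?_⟩
  · rw [hlang]
    ext w
    constructor
    · rintro ⟨v, k, hw⟩
      rw [funext fun i => (hw i).trans (hpoint v k i)]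
      exact (walk F B v k).2
    · exact fun hw => ⟨⟨w, hw⟩, 0, fun i => (hpoint ⟨w, hw⟩ 0 i).symm⟩
  · refine entTop_eq_zero_of_isBigO_pow (p := 1) hZ.1 ?_
    refine .of_bound (2 * Nat.card (langSet X (m + 1))) ?_
    filter_upwards [eventually_ge_atTop 1] with n hn
    have hcard : (langSet (orbitClosure (Set.range point)) n).ncard ≤
        Nat.card (langSet X (m + 1)) * (n + 1) :=
      hlang n ▸ ncard_walk_words_le F B (fun v => v.1 0) n
    rw [Real.norm_natCast, pow_one, Real.norm_natCast]
    exact_mod_cast hcard.trans (by nlinarith)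

theorem IsShiftSpace.exists_langSet_eq_entTop_eq_zero (hX : IsShiftSpace X) (n : ℕ) :
    ∃ Z, IsShiftSpace Z ∧ langSet Z n = langSet X n ∧ entTop Z = 0 := by
  obtain ⟨Z, hZ, hlang, hent⟩ := hX.exists_langSet_succ_eq_entTop_eq_zero n
  exact ⟨Z, hZ, langSet_eq_of_le n.le_succ hlang, hent⟩

end RauzyGraph

section PressureDrop

variable {d : ℕ} {X : Set (FullShift d)} {φ : FullShift d → ℝ}

lemma integral_le_intAvg (hφ : Continuous φ) {μ : Measure (FullShift d)} (hμ : μ ∈ InvProb X) :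
    ∫ x, φ x ∂μ ≤ intAvg X φ := by
  obtain ⟨M, hM⟩ := exists_abs_le_of_continuous hφ
  refine le_csSup ⟨M, ?_⟩ ⟨μ, hμ, rfl⟩
  rintro _ ⟨ν, ⟨hν, -, -⟩, rfl⟩
  have hnorm := norm_integral_le_of_norm_le_const (μ := ν) (f := φ) (Eventually.of_forall hM)
  rw [probReal_univ, mul_one] at hnorm
  exact (le_abs_self _).trans hnorm

lemma IsShiftSpace.exists_forall_birkhoff_le (hX : IsShiftSpace X) (hφ : Continuous φ) {c : ℝ}
    (hc : intAvg X φ < c) : ∃ N : ℕ, N ≠ 0 ∧ ∀ x ∈ X, birkhoff φ N x ≤ N * c := by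
  have hlt := eventually_forall_birkhoffAverage_lt (continuous_shift d) hX.2.1 hX.mapsTo_shift hφ
    fun μ hμ hinv hμX => (integral_le_intAvg hφ ⟨hμ, hinv.map_eq, hμX⟩).trans_lt hc
  obtain ⟨N, hN, hNpos⟩ := (hlt.and (eventually_gt_atTop 0)).exists
  refine ⟨N, hNpos.ne', fun x hx => ?_⟩
  have hle := (hN x hx).le
  rwa [birkhoffAverage, smul_eq_mul, inv_mul_le_iff₀ (Nat.cast_pos.2 hNpos)] at hle

theorem IsShiftSpace.exists_langSet_eq_pressure_lt (hX : IsShiftSpace X) (hφ : Continuous φ) {c : ℝ}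
    (hc : intAvg X φ < c) (n : ℕ) :
    ∃ Z, IsShiftSpace Z ∧ langSet Z n = langSet X n ∧ pressure Z φ < c := by
  obtain ⟨M, hM⟩ := exists_abs_le_of_continuous hφ
  obtain ⟨a, hba, hac⟩ := exists_between hc
  obtain ⟨a', haa', ha'c⟩ := exists_between hac
  obtain ⟨N, hN, hX_le⟩ := hX.exists_forall_birkhoff_le hφ hba
  obtain ⟨r, hr⟩ := exists_window_forall_eqOn_dist_lt hφ (sub_pos.2 haa')
  obtain ⟨Z, hZ, hlang, hent⟩ := hX.exists_langSet_eq_entTop_eq_zero (max n (N + 2 * r))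
  refine ⟨Z, hZ, langSet_eq_of_le (le_max_left _ _) hlang, ?_⟩
  have hZ_le := birkhoff_le_of_langSet_subset hX hZ hr hX_le
    (langSet_eq_of_le (le_max_right _ _) hlang).le
  have hpressure := pressure_le_entTop_add hZ.1 hZ.mapsTo_shift hM hN hZ_le
  linarith

end PressureDrop

theorem statement4_general {d : ℕ} {X : Set (FullShift d)} (hX : IsShiftSpace X)
    {φ : FullShift d → ℝ} (hφ : Continuous φ) (hP : intAvg X φ < pressure X φ) :
    (∀ c, intAvg X φ < c → ∀ n : ℕ, ∃ Z, IsShiftSpace Z ∧ langSet Z n = langSet X n ∧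
        pressure Z φ < c) ∧
      ¬ (∀ δ : ℝ, 0 < δ → ∃ N : ℕ, ∀ Z : Set (FullShift d), IsShiftSpace Z →
          (∀ j : ℕ, j ≤ N → langSet Z j = langSet X j) → |pressure Z φ - pressure X φ| < δ) := by
  refine ⟨fun c hc => hX.exists_langSet_eq_pressure_lt hφ hc, fun hcont => ?_⟩
  obtain ⟨c, hbc, hcP⟩ := exists_between hP
  obtain ⟨N, hN⟩ := hcont (pressure X φ - c) (sub_pos.2 hcP)
  obtain ⟨Z, hZ, hlang, hZc⟩ := hX.exists_langSet_eq_pressure_lt hφ hbc N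
  linarith [(abs_lt.1 (hN Z hZ fun j hj => langSet_eq_of_le hj hlang)).1]

/-- if every equilibrium state of `φ₀|_{X₀}` has positive entropy
(equivalently `P_top(X₀,φ₀) > b`), and `5ε < P_top(X₀,φ₀) − b`, then for every `n`
there is a shift space `Z` agreeing with `X₀` in all words of length `n` whose pressure
is at least `ε` below that of `X₀`; in particular the generalized pressure function is
not continuous at `(X₀,φ₀)` with respect to the language metric. -/
theorem statement4 {d : ℕ} (hd : 2 ≤ d) (X₀ : Set (FullShift d)) (hX₀ : IsShiftSpace X₀)
    (φ₀ : FullShift d → ℝ) (hφ₀ : Continuous φ₀)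
    (hb : intAvg X₀ φ₀ < pressure X₀ φ₀)
    (ε : ℝ) (hε : 0 < ε) (hε5 : 5 * ε < pressure X₀ φ₀ - intAvg X₀ φ₀) :
    (∀ n : ℕ, ∃ Z : Set (FullShift d), IsShiftSpace Z ∧ langSet Z n = langSet X₀ n ∧
        pressure Z φ₀ < pressure X₀ φ₀ - ε) ∧
      ¬ (∀ δ : ℝ, 0 < δ → ∃ N : ℕ, ∀ Z : Set (FullShift d), IsShiftSpace Z →
          (∀ j : ℕ, j ≤ N → langSet Z j = langSet X₀ j) →
          |pressure Z φ₀ - pressure X₀ φ₀| < δ) :=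
  have hgeneral := statement4_general hX₀ hφ₀ hb
  ⟨hgeneral.1 _ (by linarith), hgeneral.2⟩

end PaperStmt
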